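/- arXiv:1905.00605 — 2 statements merged into one kernel-verified Lean document; each statement's English description precedes it below -/
import Mathlib

section
/- Let X be a real Banach space that is uniformly convex and uniformly smooth, let 1 < p < ∞, and let M, N be closed linear subspaces of X whose sum M + N is closed. Then for every x ∈ X, the sequence generated by x₀ = x, x_{2n+1} = Π^p_M x_{2n}, x_{2n} = Π^p_N x_{2n−1} converges in norm to Π^p_{M∩N} x. -/
open Filter Topology

noncomputable section

/-- The modulus of convexity of a normed space `X`. -/
def modConvex (X : Type*) [NormedAddCommGroup X] (ε : ℝ) : ℝ :=
  sInf {d : ℝ | ∃ x y : X, ‖x‖ = 1 ∧ ‖y‖ = 1 ∧ ε ≤ ‖x - y‖ ∧ d = 1 - ‖x + y‖ / 2}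

/-- The modulus of smoothness of a normed space `X`. -/
def modSmooth (X : Type*) [NormedAddCommGroup X] [NormedSpace ℝ X] (τ : ℝ) : ℝ :=
  sSup {d : ℝ | ∃ x y : X, ‖x‖ = 1 ∧ ‖y‖ = 1 ∧ d = (‖x + τ • y‖ + ‖x - τ • y‖) / 2 - 1}

/-- `X` is uniformly convex: the modulus of convexity is positive for positive ε. -/
def UnifConvex (X : Type*) [NormedAddCommGroup X] : Prop :=
  ∀ ε : ℝ, 0 < ε → ε ≤ 2 → 0 < modConvex X ε

/-- `X` is uniformly smooth: `ρ_X(τ)/τ → 0` as `τ → 0⁺`. -/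
def UnifSmooth (X : Type*) [NormedAddCommGroup X] [NormedSpace ℝ X] : Prop :=
  Tendsto (fun τ => modSmooth X τ / τ) (𝓝[>] (0 : ℝ)) (𝓝 0)

/-- `X` is uniformly convex of power type `ρ`. -/
def PowerConvex (X : Type*) [NormedAddCommGroup X] (ρ : ℝ) : Prop :=
  ∃ c > (0 : ℝ), ∀ ε ∈ Set.Icc (0 : ℝ) 2, c * ε ^ ρ ≤ modConvex X ε

/-- `X` is uniformly smooth of power type `σ` (with `σ > 1`). -/
def PowerSmooth (X : Type*) [NormedAddCommGroup X] [NormedSpace ℝ X] (σ : ℝ) : Prop :=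
  1 < σ ∧ ∃ C > (0 : ℝ), ∀ τ ∈ Set.Icc (0 : ℝ) 1, modSmooth X τ ≤ C * τ ^ σ

variable {X : Type*} [NormedAddCommGroup X] [NormedSpace ℝ X]

/-- The duality mapping `j_p`, the Fréchet derivative of `x ↦ (1/p)‖x‖^p`. -/
def dualityMap (p : ℝ) (x : X) : X →L[ℝ] ℝ :=
  fderiv ℝ (fun y : X => 1 / p * ‖y‖ ^ p) x

/-- The Bregman distance `D_p(x, y)`. -/
def bregmanDist (p : ℝ) (x y : X) : ℝ :=
  1 / p * ‖x‖ ^ p - 1 / p * ‖y‖ ^ p - dualityMap p y (x - y)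

/-- The Bregman projection of `x` onto the set `S`: the minimizer of `m ↦ D_p(m, x)` over `S`. -/
def bregmanProj (p : ℝ) (S : Set X) (x : X) : X :=
  letI : Nonempty X := ⟨x⟩
  Classical.epsilon fun y => y ∈ S ∧ ∀ m ∈ S, bregmanDist p y x ≤ bregmanDist p m x

/-- The Bregman distance `D_p(S, x)` from the point `x` to the set `S`. -/
def bregmanDistSet (p : ℝ) (S : Set X) (x : X) : ℝ :=
  bregmanDist p (bregmanProj p S x) x

/-- The metric projection of `x` onto the set `S`: the point of `S` nearest to `x`. -/
def metricProj (S : Set X) (x : X) : X :=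
  letI : Nonempty X := ⟨x⟩
  Classical.epsilon fun y => y ∈ S ∧ ∀ m ∈ S, ‖x - y‖ ≤ ‖x - m‖

/-! ### Auxiliary lemmas -/

/-- The function `x ↦ (1/p)‖x‖^p`. -/
def bF (p : ℝ) (x : X) : ℝ := 1 / p * ‖x‖ ^ p

lemma unifConvexSpace_of (h : UnifConvex X) : UniformConvexSpace X := by
  refine ⟨fun ε hε => ?_⟩
  by_cases h2 : ε ≤ 2
  · refine ⟨2 * modConvex X ε, by have := h ε hε h2; positivity, fun x hx y hy hxy => ?_⟩
    have : modConvex X ε ≤ 1 - ‖x + y‖ / 2 := by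
      apply csInf_le
      · refine ⟨0, ?_⟩
        rintro d ⟨x, y, hx, hy, -, rfl⟩
        have := norm_add_le x y
        linarith
      · exact ⟨x, y, hx, hy, hxy, rfl⟩
    linarith
  · refine ⟨1, one_pos, fun x hx y hy hxy => ?_⟩
    have := norm_sub_le x y
    linarith

lemma modSmooth_ge (τ : ℝ) (hτ : 0 ≤ τ) (x y : X) (hx : ‖x‖ = 1) (hy : ‖y‖ = 1) :
    ‖x + τ • y‖ + ‖x - τ • y‖ - 2 ≤ 2 * modSmooth X τ := by
  have : (‖x + τ • y‖ + ‖x - τ • y‖) / 2 - 1 ≤ modSmooth X τ := by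
    apply le_csSup
    · refine ⟨τ, ?_⟩
      rintro d ⟨x, y, hx, hy, rfl⟩
      have h1 := norm_add_le x (τ • y)
      have h2 := norm_sub_le x (τ • y)
      rw [norm_smul, hy, hx, Real.norm_of_nonneg hτ] at h1 h2
      linarith
    · exact ⟨x, y, hx, hy, rfl⟩
  linarith

lemma norm_diff_unit (h : UnifSmooth X) (x : X) (hx : ‖x‖ = 1) :
    DifferentiableAt ℝ (fun y : X => ‖y‖) x := by
  obtain ⟨φ, hφ, hφx⟩ := exists_dual_vector ℝ x (by rw [hx]; exact one_ne_zero)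
  have hφle : ∀ v, φ v ≤ ‖v‖ := fun v => by
    have := φ.le_opNorm v
    rw [hφ, one_mul] at this
    exact (le_abs_self _).trans this
  have hφx1 : φ x = 1 := by rw [hφx, hx]; simp
  refine HasFDerivAt.differentiableAt (f' := φ) ?_
  rw [hasFDerivAt_iff_isLittleO_nhds_zero, Asymptotics.isLittleO_iff]
  intro c hc
  unfold UnifSmooth at h
  rw [Metric.tendsto_nhdsWithin_nhds] at h
  obtain ⟨δ, hδ, H⟩ := h (c / 2) (by positivity)
  filter_upwards [Metric.ball_mem_nhds (0 : X) hδ] with v hv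
  by_cases hv0 : v = 0
  · simp [hv0]
  have hvn : 0 < ‖v‖ := norm_pos_iff.2 hv0
  have hH := H (x := ‖v‖) hvn (by simpa using hv)
  rw [dist_zero_right, Real.norm_eq_abs] at hH
  have h1 : modSmooth X ‖v‖ / ‖v‖ < c / 2 := (le_abs_self _).trans_lt hH
  rw [div_lt_iff₀ hvn] at h1
  have h2 := modSmooth_ge ‖v‖ hvn.le x (‖v‖⁻¹ • v) hx
    (by rw [norm_smul, norm_inv, norm_norm, inv_mul_cancel₀ hvn.ne'])
  rw [smul_smul, mul_inv_cancel₀ hvn.ne', one_smul] at h2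
  have h3 := hφle (x + v)
  have h4 := hφle (x - v)
  rw [map_add, hφx1] at h3
  rw [map_sub, hφx1] at h4
  rw [Real.norm_eq_abs, abs_le, hx]
  constructor <;> nlinarith

lemma norm_diff (h : UnifSmooth X) (x : X) (hx : x ≠ 0) :
    DifferentiableAt ℝ (fun y : X => ‖y‖) x := by
  have hr : 0 < ‖x‖ := norm_pos_iff.2 hx
  have h1 := norm_diff_unit h (‖x‖⁻¹ • x)
    (by rw [norm_smul, norm_inv, norm_norm, inv_mul_cancel₀ hr.ne'])
  have h2 : DifferentiableAt ℝ (fun y : X => ‖‖x‖⁻¹ • y‖) x :=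
    DifferentiableAt.comp (g := fun y : X => ‖y‖) (f := fun y : X => ‖x‖⁻¹ • y) x h1
      (by fun_prop)
  have h3 := h2.const_mul ‖x‖
  have : (fun y : X => ‖x‖ * ‖‖x‖⁻¹ • y‖) = fun y => ‖y‖ := by
    funext y
    rw [norm_smul, norm_inv, norm_norm, mul_inv_cancel_left₀ hr.ne']
  rwa [this] at h3

lemma bF_diff (h : UnifSmooth X) {p : ℝ} (hp : 1 < p) (x : X) :
    HasFDerivAt (bF (X := X) p) (dualityMap p x) x := by
  suffices hs : DifferentiableAt ℝ (fun y : X => 1 / p * ‖y‖ ^ p) x from hs.hasFDerivAt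
  apply DifferentiableAt.const_mul
  by_cases hx : x = 0
  · subst hx
    refine HasFDerivAt.differentiableAt (f' := (0 : X →L[ℝ] ℝ)) ?_
    rw [hasFDerivAt_iff_isLittleO_nhds_zero, Asymptotics.isLittleO_iff]
    intro c hc
    have ht : Tendsto (fun v : X => ‖v‖ ^ (p - 1)) (𝓝 0) (𝓝 0) := by
      have : ContinuousAt (fun v : X => ‖v‖ ^ (p - 1)) 0 :=
        (continuous_norm.continuousAt).rpow_const (Or.inr (by linarith))
      have h0 := this.tendsto
      simpa [Real.zero_rpow (by linarith : p - 1 ≠ 0)] using h0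
    filter_upwards [ht.eventually (gt_mem_nhds hc)] with v hv
    have e : ‖v‖ ^ p = ‖v‖ ^ (p - 1) * ‖v‖ := by
      by_cases h0 : ‖v‖ = 0
      · rw [h0, Real.zero_rpow (by linarith), mul_zero]
      · rw [Real.rpow_sub_one h0, div_mul_cancel₀ _ h0]
    have h0 : (0 : ℝ) ^ p = 0 := Real.zero_rpow (by linarith)
    simp only [zero_add, norm_zero, h0, sub_zero, zero_apply]
    rw [Real.norm_of_nonneg (by positivity), e]
    exact mul_le_mul_of_nonneg_right hv.le (norm_nonneg _)
  · exact (norm_diff h x hx).rpow_const (Or.inl (norm_ne_zero_iff.2 hx))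

lemma bF_convex {p : ℝ} (hp : 1 < p) : ConvexOn ℝ Set.univ (bF (X := X) p) := by
  refine ⟨convex_univ, fun x _ y _ a b ha hb hab => ?_⟩
  have h1 : ‖a • x + b • y‖ ≤ a * ‖x‖ + b * ‖y‖ := by
    refine (norm_add_le _ _).trans ?_
    rw [norm_smul, norm_smul, Real.norm_of_nonneg ha, Real.norm_of_nonneg hb]
  have h2 : ‖a • x + b • y‖ ^ p ≤ (a * ‖x‖ + b * ‖y‖) ^ p :=
    Real.rpow_le_rpow (norm_nonneg _) h1 (by linarith)
  have h3 := (convexOn_rpow hp.le).2 (x := ‖x‖) (norm_nonneg x) (y := ‖y‖) (norm_nonneg y)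
    ha hb hab
  simp only [smul_eq_mul] at h3
  simp only [bF, smul_eq_mul]
  have hp' : 0 < 1 / p := by positivity
  calc 1 / p * ‖a • x + b • y‖ ^ p ≤ 1 / p * (a * ‖x‖ ^ p + b * ‖y‖ ^ p) :=
        mul_le_mul_of_nonneg_left (h2.trans h3) hp'.le
    _ = _ := by ring

lemma bF_line (h : UnifSmooth X) {p : ℝ} (hp : 1 < p) (x v : X) :
    HasDerivAt (fun t : ℝ => bF p (x + t • v)) (dualityMap p x v) 0 := by
  have h1 : HasDerivAt (fun t : ℝ => x + t • v) v 0 := by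
    simpa using ((hasDerivAt_id (0 : ℝ)).smul_const v).const_add x
  have h2 : HasFDerivAt (bF (X := X) p) (dualityMap p x) (x + (0 : ℝ) • v) := by
    simpa using bF_diff h hp x
  exact h2.comp_hasDerivAt (0 : ℝ) h1

lemma bF_grad (h : UnifSmooth X) {p : ℝ} (hp : 1 < p) (x y : X) :
    dualityMap p x (y - x) ≤ bF p y - bF p x := by
  have h1 := bF_line h hp x (y - x)
  have h2 : ConvexOn ℝ Set.univ (fun t : ℝ => bF p (x + t • (y - x))) := by
    have := (bF_convex (X := X) hp).comp_affineMap (AffineMap.lineMap (k := ℝ) x y)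
    simp only [Set.preimage_univ] at this
    have e : (fun t : ℝ => bF p (x + t • (y - x))) = bF p ∘ (AffineMap.lineMap (k := ℝ) x y) := by
      funext t
      simp [AffineMap.lineMap_apply, add_comm]
    rw [e]
    exact this
  have h3 := h2.le_slope_of_hasDerivAt (Set.mem_univ 0) (Set.mem_univ 1) one_pos h1
  simpa [slope_def_field] using h3

lemma bD_eq (p : ℝ) (x y : X) :
    bregmanDist p x y = bF p x - bF p y - dualityMap p y (x - y) := rfl

lemma dual_self (h : UnifSmooth X) {p : ℝ} (hp : 1 < p) (x : X) :
    dualityMap p x x = ‖x‖ ^ p := by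
  have h1 := bF_line h hp x x
  have h2 : HasDerivAt (fun t : ℝ => (1 + t) ^ p * bF p x) (p * bF p x) 0 := by
    have := (((hasDerivAt_id (0 : ℝ)).const_add 1).rpow_const (p := p)
      (Or.inr hp.le)).mul_const (bF p x)
    simpa using this
  have h3 : (fun t : ℝ => bF p (x + t • x)) =ᶠ[𝓝 0] fun t : ℝ => (1 + t) ^ p * bF p x := by
    filter_upwards [lt_mem_nhds (show (-1 : ℝ) < 0 by norm_num)] with t ht
    have e : x + t • x = (1 + t) • x := by rw [add_smul, one_smul]
    simp only [bF]
    rw [e, norm_smul, Real.norm_of_nonneg (by linarith),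
      Real.mul_rpow (by linarith) (norm_nonneg _)]
    ring
  have h4 := (h2.congr_of_eventuallyEq h3).unique h1
  rw [← h4, bF]
  field_simp

lemma dual_bound (h : UnifSmooth X) {p : ℝ} (hp : 1 < p) (R : ℝ) (hR : 0 ≤ R) (x : X)
    (hx : ‖x‖ ≤ R) (v : X) : |dualityMap p x v| ≤ (1 / p * (R + 1) ^ p) * ‖v‖ := by
  have key : ∀ w : X, ‖w‖ = 1 → dualityMap p x w ≤ 1 / p * (R + 1) ^ p := by
    intro w hw
    have h1 := bF_grad h hp x (x + w)
    rw [add_sub_cancel_left] at h1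
    have h2 : bF p (x + w) ≤ 1 / p * (R + 1) ^ p := by
      apply mul_le_mul_of_nonneg_left _ (by positivity)
      apply Real.rpow_le_rpow (norm_nonneg _) _ (by linarith)
      exact (norm_add_le _ _).trans (by linarith)
    have h3 : 0 ≤ bF p x := by unfold bF; positivity
    linarith
  by_cases hv : v = 0
  · simp [hv]
  have hvn : 0 < ‖v‖ := norm_pos_iff.2 hv
  have hw : ‖‖v‖⁻¹ • v‖ = 1 := by rw [norm_smul, norm_inv, norm_norm, inv_mul_cancel₀ hvn.ne']
  have k1 := key (‖v‖⁻¹ • v) hw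
  have k2 := key (-(‖v‖⁻¹ • v)) (by rw [norm_neg, hw])
  rw [map_neg, map_smul, smul_eq_mul] at k2
  rw [map_smul, smul_eq_mul] at k1
  rw [inv_mul_eq_div] at k1 k2
  rw [div_le_iff₀ hvn] at k1
  rw [← neg_div, div_le_iff₀ hvn] at k2
  rw [abs_le]
  constructor <;> linarith

lemma bF_unif (hc : UnifConvex X) {p : ℝ} (hp : 1 < p) (R ε : ℝ) (hε : 0 < ε) :
    ∃ δ > 0, ∀ x y : X, ‖x‖ ≤ R → ‖y‖ ≤ R → ε ≤ ‖x - y‖ →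
      δ ≤ bF p x + bF p y - 2 * bF p ((1 / 2 : ℝ) • (x + y)) := by
  have := unifConvexSpace_of hc
  by_cases hR : R ≤ 0
  · refine ⟨1, one_pos, fun x y hx hy hxy => ?_⟩
    have := norm_sub_le x y
    linarith
  push Not at hR
  obtain ⟨δ, hδ, H⟩ := exists_forall_closed_ball_dist_add_le_two_sub X (div_pos hε hR)
  set c := ε * δ / 4 with hcdef
  have hcpos : 0 < c := by positivity
  -- the scalar part
  obtain ⟨η, hη, Hη⟩ : ∃ η > 0, ∀ s t : ℝ, 0 ≤ t → s ≤ R → t + c ≤ s →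
      η ≤ s ^ p + t ^ p - 2 * ((s + t) / 2) ^ p := by
    set K : Set (ℝ × ℝ) := (Set.Icc 0 R ×ˢ Set.Icc 0 R) ∩ {q | q.2 + c ≤ q.1} with hK
    have hKc : IsCompact K := (isCompact_Icc.prod isCompact_Icc).inter_right
      (isClosed_le (by fun_prop) (by fun_prop))
    have hcont : Continuous (fun q : ℝ × ℝ => q.1 ^ p + q.2 ^ p - 2 * ((q.1 + q.2) / 2) ^ p) := by
      have hp0 : 0 ≤ p := by linarith
      have : Continuous (fun r : ℝ => r ^ p) := Real.continuous_rpow_const hp0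
      have a1 := this.comp (continuous_fst (X := ℝ) (Y := ℝ))
      have a2 := this.comp (continuous_snd (X := ℝ) (Y := ℝ))
      have a3 := this.comp (show Continuous (fun q : ℝ × ℝ => (q.1 + q.2) / 2) by fun_prop)
      exact (a1.add a2).sub (a3.const_mul 2)
    have hmem : ∀ s t : ℝ, 0 ≤ t → s ≤ R → t + c ≤ s → (s, t) ∈ K := by
      intro s t h1 h2 h3
      refine ⟨⟨⟨?_, ?_⟩, ⟨?_, ?_⟩⟩, h3⟩ <;> simp <;> linarith
    by_cases hne : K.Nonempty
    · obtain ⟨q, hq, hmin⟩ := hKc.exists_isMinOn hne hcont.continuousOn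
      refine ⟨_, ?_, fun s t h1 h2 h3 => hmin (hmem s t h1 h2 h3)⟩
      obtain ⟨⟨⟨q1, _⟩, ⟨q2, _⟩⟩, q3⟩ := hq
      have q3' : q.2 + c ≤ q.1 := q3
      have := (strictConvexOn_rpow hp).2 q1 q2
        (by intro e; rw [e] at q3'; linarith)
        (show (0 : ℝ) < 1 / 2 by norm_num) (show (0 : ℝ) < 1 / 2 by norm_num) (by norm_num)
      simp only [smul_eq_mul] at this
      rw [show 1 / 2 * q.1 + 1 / 2 * q.2 = (q.1 + q.2) / 2 by ring] at this
      show 0 < q.1 ^ p + q.2 ^ p - 2 * ((q.1 + q.2) / 2) ^ p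
      linarith
    · exact ⟨1, one_pos, fun s t h1 h2 h3 => (hne ⟨_, hmem s t h1 h2 h3⟩).elim⟩
  have hp' : 0 < 1 / p := by positivity
  have hcp : 0 < c ^ p := Real.rpow_pos_of_pos hcpos _
  -- the ordered case
  have ordered : ∀ x y : X, ‖x‖ ≤ R → ‖y‖ ≤ R → ε ≤ ‖x - y‖ → ‖y‖ ≤ ‖x‖ →
      min η (c ^ p) ≤ ‖x‖ ^ p + ‖y‖ ^ p - 2 * (‖x + y‖ / 2) ^ p := by
    intro x y hx hy hxy hle
    rcases le_or_gt (‖y‖ + c) ‖x‖ with h1 | h1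
    · have h2 := Hη ‖x‖ ‖y‖ (norm_nonneg _) hx h1
      have h3 : (‖x + y‖ / 2) ^ p ≤ ((‖x‖ + ‖y‖) / 2) ^ p := by
        apply Real.rpow_le_rpow (by positivity) _ (by linarith)
        have := norm_add_le x y
        linarith
      exact (min_le_left _ _).trans (by linarith)
    · have hs : ε ≤ 2 * ‖x‖ := by
        have := norm_sub_le x y
        linarith
      have hxp : 0 < ‖x‖ := by linarith
      have n1 : ‖‖x‖⁻¹ • x‖ ≤ 1 := by
        rw [norm_smul, norm_inv, norm_norm, inv_mul_cancel₀ hxp.ne']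
      have n2 : ‖‖x‖⁻¹ • y‖ ≤ 1 := by
        rw [norm_smul, norm_inv, norm_norm, inv_mul_eq_div, div_le_one hxp]; exact hle
      have n3 : ε / R ≤ ‖‖x‖⁻¹ • x - ‖x‖⁻¹ • y‖ := by
        rw [← smul_sub, norm_smul, norm_inv, norm_norm, inv_mul_eq_div]
        gcongr
      have n4 := H n1 n2 n3
      rw [← smul_add, norm_smul, norm_inv, norm_norm, inv_mul_eq_div, div_le_iff₀ hxp] at n4
      have n5 : ‖x + y‖ / 2 ≤ ‖x‖ - c := by
        have : ε * δ ≤ 2 * ‖x‖ * δ := mul_le_mul_of_nonneg_right hs hδ.le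
        rw [hcdef]; nlinarith
      have n6 : 0 ≤ ‖x‖ - c := le_trans (by positivity) n5
      have n7 : (‖x + y‖ / 2) ^ p ≤ (‖x‖ - c) ^ p :=
        Real.rpow_le_rpow (by positivity) n5 (by linarith)
      have n8 : (‖x‖ - c) ^ p ≤ ‖y‖ ^ p := Real.rpow_le_rpow n6 (by linarith) (by linarith)
      have n9 := Real.add_rpow_le_rpow_add n6 hcpos.le hp.le
      rw [sub_add_cancel] at n9
      exact (min_le_right _ _).trans (by linarith)
  refine ⟨1 / p * min η (c ^ p), mul_pos hp' (lt_min hη hcp), fun x y hx hy hxy => ?_⟩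
  have key : min η (c ^ p) ≤ ‖x‖ ^ p + ‖y‖ ^ p - 2 * (‖x + y‖ / 2) ^ p := by
    rcases le_total ‖y‖ ‖x‖ with h1 | h1
    · exact ordered x y hx hy hxy h1
    · have := ordered y x hy hx (by rwa [norm_sub_rev]) h1
      rw [add_comm y x] at this
      linarith
  have := mul_le_mul_of_nonneg_left key hp'.le
  simp only [bF]
  rw [norm_smul, show ‖(1 / 2 : ℝ)‖ * ‖x + y‖ = ‖x + y‖ / 2 by norm_num; ring]
  linarith

lemma bD_nonneg (h : UnifSmooth X) {p : ℝ} (hp : 1 < p) (x y : X) : 0 ≤ bregmanDist p x y := by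
  rw [bD_eq]
  have := bF_grad h hp y x
  linarith

lemma bD_lower (h : UnifSmooth X) {p : ℝ} (hp : 1 < p) (x y : X) :
    bF p x + bF p y - 2 * bF p ((1 / 2 : ℝ) • (x + y)) ≤ bregmanDist p x y := by
  rw [bD_eq]
  have h1 := bF_grad h hp y ((1 / 2 : ℝ) • (x + y))
  have e : (1 / 2 : ℝ) • (x + y) - y = (1 / 2 : ℝ) • (x - y) := by module
  rw [e, map_smul, smul_eq_mul] at h1
  linarith

lemma bD_unif (hc : UnifConvex X) (h : UnifSmooth X) {p : ℝ} (hp : 1 < p) (R ε : ℝ)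
    (hε : 0 < ε) : ∃ δ > 0, ∀ x y : X, ‖x‖ ≤ R → ‖y‖ ≤ R → bregmanDist p x y < δ →
      ‖x - y‖ < ε := by
  obtain ⟨δ, hδ, H⟩ := bF_unif hc hp R ε hε
  refine ⟨δ, hδ, fun x y hx hy hxy => ?_⟩
  by_contra! hcon
  have h1 := H x y hx hy hcon
  have h2 := bD_lower h hp x y
  linarith

lemma bD_small (h : UnifSmooth X) {p : ℝ} (hp : 1 < p) (R : ℝ) (hR : 0 ≤ R) (x y : X)
    (hx : ‖x‖ ≤ R) (hy : ‖y‖ ≤ R) :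
    bregmanDist p x y ≤ 2 * (1 / p * (R + 1) ^ p) * ‖x - y‖ := by
  rw [bD_eq]
  have h1 := bF_grad h hp x y
  have h2 := abs_le.1 (dual_bound h hp R hR x hx (y - x))
  have h3 := abs_le.1 (dual_bound h hp R hR y hy (x - y))
  rw [norm_sub_rev] at h2
  linarith [h2.1, h3.1]

lemma bD_coercive {p : ℝ} (hp : 1 < p) (x : X) (C : ℝ) :
    ∃ R : ℝ, ∀ m : X, bregmanDist p m x ≤ C → ‖m‖ ≤ R := by
  set B := ‖dualityMap p x‖ with hB
  set A := C + bF p x - dualityMap p x x with hA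
  have ht := (tendsto_rpow_atTop (show 0 < p - 1 by linarith)).eventually_ge_atTop (p * (B + 1))
  obtain ⟨T, hT⟩ := eventually_atTop.1 ht
  refine ⟨max (max T 1) A, fun m hm => ?_⟩
  by_contra! hcon
  have hT' : T ≤ ‖m‖ := ((le_max_left _ _).trans (le_max_left _ _)).trans hcon.le
  have h1' : 1 ≤ ‖m‖ := ((le_max_right _ _).trans (le_max_left _ _)).trans hcon.le
  have hA' : A < ‖m‖ := (le_max_right _ _).trans_lt hcon
  have hpos : 0 < ‖m‖ := by linarith
  have h1 := hT ‖m‖ hT'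
  rw [Real.rpow_sub_one hpos.ne', le_div_iff₀ hpos] at h1
  have h2 : (B + 1) * ‖m‖ ≤ bF p m := by
    unfold bF
    rw [one_div, inv_mul_eq_div, le_div_iff₀ (by linarith)]
    linarith
  have h3 : dualityMap p x m ≤ B * ‖m‖ := (le_abs_self _).trans ((dualityMap p x).le_opNorm m)
  rw [bD_eq, map_sub] at hm
  linarith

lemma bF_cont {p : ℝ} (hp : 1 < p) : Continuous (bF (X := X) p) :=
  (continuous_norm.rpow_const (fun _ => Or.inr (by linarith))).const_mul _

lemma bD_mid {p : ℝ} (x m k : X) :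
    bF p m + bF p k - 2 * bF p ((1 / 2 : ℝ) • (m + k)) =
      bregmanDist p m x + bregmanDist p k x - 2 * bregmanDist p ((1 / 2 : ℝ) • (m + k)) x := by
  simp only [bD_eq, map_sub, map_smul, map_add, smul_eq_mul]
  ring

lemma exists_proj [CompleteSpace X] (hc : UnifConvex X) (h : UnifSmooth X) {p : ℝ} (hp : 1 < p)
    (S : Submodule ℝ X) (hS : IsClosed (S : Set X)) (x : X) :
    ∃ y, y ∈ (S : Set X) ∧ ∀ m ∈ (S : Set X), bregmanDist p y x ≤ bregmanDist p m x := by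
  set G : Set ℝ := (fun m => bregmanDist p m x) '' (S : Set X) with hG
  have hGne : G.Nonempty := ⟨_, 0, S.zero_mem, rfl⟩
  have hGb : BddBelow G := by
    refine ⟨0, ?_⟩
    rintro _ ⟨m, -, rfl⟩
    exact bD_nonneg h hp m x
  set d := sInf G with hd
  have hdle : ∀ m ∈ S, d ≤ bregmanDist p m x := fun m hm => csInf_le hGb ⟨m, hm, rfl⟩
  have hseq : ∀ n : ℕ, ∃ m ∈ S, bregmanDist p m x < d + 1 / ((n : ℝ) + 1) := by
    intro n
    obtain ⟨_, ⟨m, hm, rfl⟩, hlt⟩ := exists_lt_of_csInf_lt hGne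
      (show sInf G < d + 1 / ((n : ℝ) + 1) by
        have : 0 < 1 / ((n : ℝ) + 1) := by positivity
        linarith)
    exact ⟨m, hm, hlt⟩
  choose u huS hu using hseq
  obtain ⟨R, hR⟩ := bD_coercive hp x (d + 1)
  have huR : ∀ n, ‖u n‖ ≤ R := by
    intro n
    apply hR
    have : 1 / ((n : ℝ) + 1) ≤ 1 := by
      rw [div_le_one (by positivity)]
      have : (0 : ℝ) ≤ n := by positivity
      linarith
    linarith [hu n]
  have htend : Tendsto (fun n : ℕ => 1 / ((n : ℝ) + 1)) atTop (𝓝 0) :=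
    tendsto_one_div_add_atTop_nhds_zero_nat
  have hcau : CauchySeq u := by
    rw [Metric.cauchySeq_iff]
    intro ε hε
    obtain ⟨δ, hδ, H⟩ := bF_unif hc hp R ε hε
    obtain ⟨n0, hn0⟩ := eventually_atTop.1 (htend.eventually (gt_mem_nhds (half_pos hδ)))
    refine ⟨n0, fun m hm k hk => ?_⟩
    rw [dist_eq_norm]
    by_contra! hcon
    have h1 := H _ _ (huR m) (huR k) hcon
    rw [bD_mid x] at h1
    have h2 := hdle _ (S.smul_mem (1 / 2 : ℝ) (S.add_mem (huS m) (huS k)))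
    linarith [hu m, hu k, hn0 m hm, hn0 k hk]
  obtain ⟨y, hy⟩ := cauchySeq_tendsto_of_complete hcau
  refine ⟨y, hS.mem_of_tendsto hy (Eventually.of_forall huS), fun m hm => ?_⟩
  have hcont : Continuous (fun m : X => bregmanDist p m x) := by
    simp only [bD_eq]
    exact ((bF_cont hp).sub continuous_const).sub
      ((dualityMap p x).continuous.comp (continuous_id.sub continuous_const))
  have h1 : Tendsto (fun n => bregmanDist p (u n) x) atTop (𝓝 (bregmanDist p y x)) :=
    (hcont.tendsto y).comp hy
  have h2 : Tendsto (fun n : ℕ => d + 1 / ((n : ℝ) + 1)) atTop (𝓝 (d + 0)) := htend.const_add d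
  have h3 := le_of_tendsto_of_tendsto' h1 h2 (fun n => (hu n).le)
  rw [add_zero] at h3
  exact h3.trans (hdle m hm)

lemma proj_unique (hc : UnifConvex X) {p : ℝ} (hp : 1 < p)
    (S : Submodule ℝ X) (x y z : X) (hy : y ∈ S)
    (hy' : ∀ m ∈ S, bregmanDist p y x ≤ bregmanDist p m x) (hz : z ∈ S)
    (hz' : ∀ m ∈ S, bregmanDist p z x ≤ bregmanDist p m x) : y = z := by
  by_contra hne
  have hpos : 0 < ‖y - z‖ := norm_pos_iff.2 (sub_ne_zero.2 hne)
  obtain ⟨δ, hδ, H⟩ := bF_unif hc hp (max ‖y‖ ‖z‖) _ hpos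
  have h1 := H y z (le_max_left _ _) (le_max_right _ _) le_rfl
  rw [bD_mid x] at h1
  have hm := S.smul_mem (1 / 2 : ℝ) (S.add_mem hy hz)
  linarith [hy' _ hm, hz' _ hm]

lemma bregmanProj_spec [CompleteSpace X] (hc : UnifConvex X) (h : UnifSmooth X) {p : ℝ}
    (hp : 1 < p) (S : Submodule ℝ X) (hS : IsClosed (S : Set X)) (x : X) :
    bregmanProj p (S : Set X) x ∈ S ∧
      ∀ m ∈ S, bregmanDist p (bregmanProj p (S : Set X) x) x ≤ bregmanDist p m x :=
  Classical.epsilon_spec (exists_proj hc h hp S hS x)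

lemma proj_orth (h : UnifSmooth X) {p : ℝ} (hp : 1 < p)
    (S : Submodule ℝ X) (x y : X) (hy : y ∈ S)
    (hy' : ∀ m ∈ S, bregmanDist p y x ≤ bregmanDist p m x) (v : X) (hv : v ∈ S) :
    dualityMap p y v = dualityMap p x v := by
  have h1 : HasDerivAt (fun t : ℝ => bF p (y + t • v) - t * dualityMap p x v)
      (dualityMap p y v - dualityMap p x v) 0 := by
    have := (bF_line h hp y v).sub ((hasDerivAt_id (0 : ℝ)).mul_const (dualityMap p x v))
    rw [one_mul] at this
    exact this
  have h2 : IsLocalMin (fun t : ℝ => bF p (y + t • v) - t * dualityMap p x v) 0 := by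
    refine Eventually.of_forall fun t => ?_
    have := hy' (y + t • v) (S.add_mem hy (S.smul_mem t hv))
    simp only [bD_eq, map_sub, map_add, map_smul, smul_eq_mul] at this
    simp only [zero_smul, add_zero, zero_mul, sub_zero]
    linarith
  have := h2.hasDerivAt_eq_zero h1
  linarith

lemma three_point {p : ℝ} (x y z : X)
    (ho : dualityMap p y (z - y) = dualityMap p x (z - y)) :
    bregmanDist p z x = bregmanDist p z y + bregmanDist p y x := by
  simp only [bD_eq, map_sub] at *
  linarith

lemma linear_reg [CompleteSpace X] (M N : Submodule ℝ X) (hM : IsClosed (M : Set X))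
    (hN : IsClosed (N : Set X)) (hMN : IsClosed ((M ⊔ N : Submodule ℝ X) : Set X)) :
    ∃ C > 0, ∀ x ∈ M, ∀ y ∈ N, ∃ z ∈ M ⊓ N, ‖z - x‖ ≤ C * ‖x - y‖ ∧ ‖z - y‖ ≤ C * ‖x - y‖ := by
  have := hM.completeSpace_coe
  have := hN.completeSpace_coe
  have := hMN.completeSpace_coe
  let T0 : (M × N) →L[ℝ] X := M.subtypeL.coprod N.subtypeL
  let T : (M × N) →L[ℝ] (M ⊔ N : Submodule ℝ X) := T0.codRestrict (M ⊔ N) (fun q => by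
    simp only [T0, ContinuousLinearMap.coprod_apply]
    exact Submodule.add_mem_sup q.1.2 q.2.2)
  have hT : Function.Surjective T := by
    rintro ⟨w, hw⟩
    obtain ⟨u, hu, v, hv, rfl⟩ := Submodule.mem_sup.1 hw
    exact ⟨(⟨u, hu⟩, ⟨v, hv⟩), Subtype.ext rfl⟩
  obtain ⟨C, hC, H⟩ := T.exists_preimage_norm_le hT
  refine ⟨C, hC, fun x hx y hy => ?_⟩
  obtain ⟨⟨u, v⟩, huv, hn⟩ := H ⟨x - y, sub_eq_add_neg x y ▸
    Submodule.add_mem_sup hx (N.neg_mem hy)⟩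
  have e : (u : X) + v = x - y := congrArg Subtype.val huv
  have hn' : ‖((u, v) : M × N)‖ ≤ C * ‖x - y‖ := hn
  have hu : ‖(u : X)‖ ≤ C * ‖x - y‖ := (le_max_left _ _).trans hn'
  have hv : ‖(v : X)‖ ≤ C * ‖x - y‖ := (le_max_right _ _).trans hn'
  have e2 : x - u = y + v := by
    rw [sub_eq_iff_eq_add]
    have : x = (u : X) + v + y := by rw [e]; abel
    rw [this]; abel
  refine ⟨x - u, ⟨M.sub_mem hx u.2, ?_⟩, ?_, ?_⟩
  · rw [e2]; exact N.add_mem hy v.2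
  · simpa using hu
  · rw [e2]; simpa using hv

theorem statement13 {X : Type*} [NormedAddCommGroup X] [NormedSpace ℝ X] [CompleteSpace X]
    (hconv : UnifConvex X) (hsmooth : UnifSmooth X) (p : ℝ) (hp : 1 < p)
    (M N : Submodule ℝ X) (hM : IsClosed (M : Set X)) (hN : IsClosed (N : Set X))
    (hMN : IsClosed ((M ⊔ N : Submodule ℝ X) : Set X))
    (a : X) (x : ℕ → X) (hx0 : x 0 = a)
    (hodd : ∀ n : ℕ, x (2 * n + 1) = bregmanProj p (M : Set X) (x (2 * n)))
    (heven : ∀ n : ℕ, x (2 * n + 2) = bregmanProj p (N : Set X) (x (2 * n + 1))) :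
    Filter.Tendsto x Filter.atTop
      (𝓝 (bregmanProj p ((M ⊓ N : Submodule ℝ X) : Set X) a)) := by
  have step : ∀ n, ∃ S : Submodule ℝ X, (S = M ∨ S = N) ∧ x (n + 1) ∈ S ∧
      ∀ m ∈ S, bregmanDist p (x (n + 1)) (x n) ≤ bregmanDist p m (x n) := by
    intro n
    rcases Nat.even_or_odd' n with ⟨k, hk | hk⟩
    · refine ⟨M, Or.inl rfl, ?_⟩
      rw [hk, hodd k]
      exact bregmanProj_spec hconv hsmooth hp M hM _
    · refine ⟨N, Or.inr rfl, ?_⟩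
      rw [hk, show 2 * k + 1 + 1 = 2 * k + 2 from rfl, heven k]
      exact bregmanProj_spec hconv hsmooth hp N hN _
  have hInf : ∀ S : Submodule ℝ X, (S = M ∨ S = N) → ∀ z ∈ M ⊓ N, z ∈ S := by
    rintro S (rfl | rfl) z hz
    · exact hz.1
    · exact hz.2
  -- orthogonality and the three point identity along the sequence
  have orth : ∀ n, ∀ z ∈ M ⊓ N, dualityMap p (x (n + 1)) z = dualityMap p (x n) z := by
    intro n z hz
    obtain ⟨S, hS, h1, h2⟩ := step n
    exact proj_orth hsmooth hp S _ _ h1 h2 z (hInf S hS z hz)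
  have tp : ∀ n, ∀ z ∈ M ⊓ N, bregmanDist p z (x n) =
      bregmanDist p z (x (n + 1)) + bregmanDist p (x (n + 1)) (x n) := by
    intro n z hz
    obtain ⟨S, hS, h1, h2⟩ := step n
    exact three_point _ _ _
      (proj_orth hsmooth hp S _ _ h1 h2 _ (S.sub_mem (hInf S hS z hz) h1))
  have anti : ∀ z ∈ M ⊓ N, Antitone (fun n => bregmanDist p z (x n)) := by
    intro z hz
    refine antitone_nat_of_succ_le fun n => ?_
    have h1 := tp n z hz
    have h2 := bD_nonneg hsmooth hp (x (n + 1)) (x n)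
    linarith
  -- boundedness
  have hD0 : ∀ y : X, bregmanDist p 0 y = (1 - 1 / p) * ‖y‖ ^ p := by
    intro y
    rw [bD_eq, zero_sub, map_neg, dual_self hsmooth hp]
    simp only [bF, norm_zero]
    rw [Real.zero_rpow (by linarith)]
    ring
  have hcoef : 0 < 1 - 1 / p := by
    rw [sub_pos, div_lt_one (by linarith)]; exact hp
  have bdd : ∀ n, ‖x n‖ ≤ ‖a‖ := by
    intro n
    have h1 : bregmanDist p 0 (x n) ≤ bregmanDist p 0 (x 0) :=
      anti 0 (Submodule.zero_mem _) (Nat.zero_le n)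
    rw [hD0, hD0, hx0] at h1
    have h2 := le_of_mul_le_mul_left h1 hcoef
    exact (Real.rpow_le_rpow_iff (norm_nonneg _) (norm_nonneg _) (by linarith)).1 h2
  -- consecutive distances tend to zero
  have hDconv : Tendsto (fun n => bregmanDist p (x (n + 1)) (x n)) atTop (𝓝 0) := by
    have hb : BddBelow (Set.range fun n => bregmanDist p 0 (x n)) :=
      ⟨0, by rintro _ ⟨n, rfl⟩; exact bD_nonneg hsmooth hp _ _⟩
    have h1 := tendsto_atTop_ciInf (anti 0 (Submodule.zero_mem _)) hb
    have h2 := h1.sub (h1.comp (tendsto_add_atTop_nat 1))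
    rw [sub_self] at h2
    refine h2.congr fun n => ?_
    have := tp n 0 (Submodule.zero_mem _)
    simp only [Function.comp]
    linarith
  have hstep0 : Tendsto (fun n => ‖x (n + 1) - x n‖) atTop (𝓝 0) := by
    rw [Metric.tendsto_atTop]
    intro ε hε
    obtain ⟨δ, hδ, H⟩ := bD_unif hconv hsmooth hp ‖a‖ ε hε
    obtain ⟨n0, hn0⟩ := eventually_atTop.1 (hDconv.eventually (gt_mem_nhds hδ))
    refine ⟨n0, fun n hn => ?_⟩
    rw [dist_zero_right, norm_norm]
    exact H _ _ (bdd _) (bdd _) (hn0 n hn)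
  -- nearby points in the intersection
  obtain ⟨C, hC, HC⟩ := linear_reg M N hM hN hMN
  have near : ∀ n, ∃ z ∈ M ⊓ N, ‖z - x (n + 1)‖ ≤ C * ‖x (n + 1 + 1) - x (n + 1)‖ := by
    intro n
    rcases Nat.even_or_odd' n with ⟨k, hk | hk⟩
    · have h1 : x (n + 1) ∈ M := by
        rw [hk, hodd k]; exact (bregmanProj_spec hconv hsmooth hp M hM _).1
      have h2 : x (n + 1 + 1) ∈ N := by
        rw [hk, show 2 * k + 1 + 1 = 2 * k + 2 from rfl, heven k]
        exact (bregmanProj_spec hconv hsmooth hp N hN _).1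
      obtain ⟨z, hz, hz1, -⟩ := HC _ h1 _ h2
      exact ⟨z, hz, by rwa [norm_sub_rev (x (n + 1))] at hz1⟩
    · have h1 : x (n + 1) ∈ N := by
        rw [hk, show 2 * k + 1 + 1 = 2 * k + 2 from rfl, heven k]
        exact (bregmanProj_spec hconv hsmooth hp N hN _).1
      have h2 : x (n + 1 + 1) ∈ M := by
        rw [hk, show 2 * k + 1 + 1 + 1 = 2 * (k + 1) + 1 by ring, hodd (k + 1)]
        exact (bregmanProj_spec hconv hsmooth hp M hM _).1
      obtain ⟨z, hz, -, hz2⟩ := HC _ h2 _ h1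
      exact ⟨z, hz, hz2⟩
  choose z hzmem hz using near
  have hz0 : Tendsto (fun n => ‖z n - x (n + 1)‖) atTop (𝓝 0) := by
    have h1 := (hstep0.comp (tendsto_add_atTop_nat 1)).const_mul C
    rw [mul_zero] at h1
    exact squeeze_zero (fun n => norm_nonneg _) hz h1
  set R : ℝ := ‖a‖ + 1 with hRdef
  have hR : 0 ≤ R := by positivity
  have bddR : ∀ n, ‖x n‖ ≤ R := fun n => (bdd n).trans (by linarith)
  set K : ℝ := 2 * (1 / p * (R + 1) ^ p) with hK
  have hzR : ∀ᶠ n in atTop, ‖z n‖ ≤ R := by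
    filter_upwards [hz0.eventually (gt_mem_nhds one_pos)] with n hn
    have h1 := norm_add_le (z n - x (n + 1)) (x (n + 1))
    rw [sub_add_cancel] at h1
    linarith [bdd (n + 1)]
  have hKz : Tendsto (fun n => K * ‖z n - x (n + 1)‖) atTop (𝓝 0) := by
    simpa using hz0.const_mul K
  have hcau : CauchySeq x := by
    rw [Metric.cauchySeq_iff]
    intro ε hε
    obtain ⟨δ, hδ, H⟩ := bD_unif hconv hsmooth hp R (ε / 2) (half_pos hε)
    obtain ⟨n, hn1, hn2⟩ := (hzR.and (hKz.eventually (gt_mem_nhds hδ))).exists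
    have hd : ∀ m ≥ n + 1, ‖z n - x m‖ < ε / 2 := by
      intro m hm
      refine H _ _ hn1 (bddR m) ?_
      have h1 : bregmanDist p (z n) (x m) ≤ bregmanDist p (z n) (x (n + 1)) :=
        anti (z n) (hzmem n) hm
      exact (h1.trans (bD_small hsmooth hp R hR _ _ hn1 (bddR _))).trans_lt hn2
    refine ⟨n + 1, fun m hm k hk => ?_⟩
    have h1 := dist_triangle_left (x m) (x k) (z n)
    rw [dist_eq_norm (z n), dist_eq_norm (z n)] at h1
    linarith [hd m hm, hd k hk]
  obtain ⟨w, hw⟩ := cauchySeq_tendsto_of_complete hcau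
  have hInfClosed : IsClosed ((M ⊓ N : Submodule ℝ X) : Set X) := by
    rw [Submodule.coe_inf]; exact hM.inter hN
  have hwmem : w ∈ M ⊓ N := by
    have h1 : Tendsto z atTop (𝓝 w) := by
      have h2 := (tendsto_zero_iff_norm_tendsto_zero.2 hz0).add
        (hw.comp (tendsto_add_atTop_nat 1))
      rw [zero_add] at h2
      refine h2.congr fun n => ?_
      simp
    exact hInfClosed.mem_of_tendsto h1 (Eventually.of_forall hzmem)
  have hwR : ‖w‖ ≤ R := le_of_tendsto' hw.norm bddR
  have hDw : Tendsto (fun n => bregmanDist p w (x n)) atTop (𝓝 0) := by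
    have h1 : Tendsto (fun n => K * ‖w - x n‖) atTop (𝓝 0) := by
      have h2 : Tendsto (fun n => w - x n) atTop (𝓝 0) := by
        simpa using hw.const_sub w
      simpa using (tendsto_zero_iff_norm_tendsto_zero.1 h2).const_mul K
    exact squeeze_zero (fun n => bD_nonneg hsmooth hp _ _)
      (fun n => bD_small hsmooth hp R hR _ _ hwR (bddR n)) h1
  have hconst : ∀ v ∈ M ⊓ N, ∀ n, bregmanDist p v (x n) - bregmanDist p w (x n) =
      bregmanDist p v a - bregmanDist p w a := by
    intro v hv n
    induction n with
    | zero => rw [hx0]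
    | succ n ih =>
      have h1 := tp n v hv
      have h2 := tp n w hwmem
      linarith
  have hwmin : ∀ v ∈ M ⊓ N, bregmanDist p w a ≤ bregmanDist p v a := by
    intro v hv
    have h1 : ∀ n, bregmanDist p w a - bregmanDist p v a ≤ bregmanDist p w (x n) := by
      intro n
      have h2 := hconst v hv n
      have h3 := bD_nonneg hsmooth hp v (x n)
      linarith
    have := ge_of_tendsto' hDw h1
    linarith
  obtain ⟨q1, q2⟩ := bregmanProj_spec hconv hsmooth hp (M ⊓ N) hInfClosed a
  have := proj_unique hconv hp (M ⊓ N) a _ _ q1 q2 hwmem hwmin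
  rw [this]
  exact hw
end
end

section
/- Let X be a real Banach space that is uniformly convex and uniformly smooth, and let M, N be closed linear subspaces of X with closed sum M + N. Then for every x ∈ X, the sequence defined by x₀ = x, x_{2n+1} = (I − P_M)x_{2n}, x_{2n} = (I − P_N)x_{2n−1} converges in norm to (I − P_{M+N})x. -/
open Filter Topology

noncomputable section

variable {X : Type*} [NormedAddCommGroup X] [NormedSpace ℝ X]

theorem aux_uc {X : Type*} [NormedAddCommGroup X] [NormedSpace ℝ X]
    (hconv : UnifConvex X) : UniformConvexSpace X := by
  refine ⟨fun {ε} hε => ?_⟩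
  by_cases h2 : ε ≤ 2
  · refine ⟨2 * modConvex X ε, by have := hconv ε hε h2; linarith, ?_⟩
    intro x hx y hy hxy
    have hbdd : BddBelow {d : ℝ | ∃ x y : X, ‖x‖ = 1 ∧ ‖y‖ = 1 ∧ ε ≤ ‖x - y‖ ∧
        d = 1 - ‖x + y‖ / 2} := by
      refine ⟨0, ?_⟩
      rintro d ⟨x, y, hx, hy, -, rfl⟩
      have := norm_add_le x y
      linarith
    have : modConvex X ε ≤ 1 - ‖x + y‖ / 2 := csInf_le hbdd ⟨x, y, hx, hy, hxy, rfl⟩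
    linarith
  · refine ⟨1, one_pos, ?_⟩
    intro x hx y hy hxy
    have := norm_sub_le x y
    linarith

theorem aux_conv {X : Type*} [NormedAddCommGroup X] [NormedSpace ℝ X]
    (hconv : UnifConvex X) (r : ℝ) (hr : 0 ≤ r) (ε : ℝ) (hε : 0 < ε) :
    ∃ δ > 0, ∀ u v : X, ‖u‖ ≤ r + δ → ‖v‖ ≤ r + δ → 2 * r ≤ ‖u + v‖ → ‖u - v‖ < ε := by
  haveI := aux_uc hconv
  rcases hr.eq_or_lt with rfl | hr
  · refine ⟨ε / 3, by positivity, fun u v hu hv _ => ?_⟩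
    have := norm_sub_le u v
    linarith
  · obtain ⟨d, hd, H⟩ := exists_forall_closed_ball_dist_add_le_two_mul_sub X (half_pos hε) r
    refine ⟨min r (d / 3), by positivity, fun u v hu hv huv => ?_⟩
    set δ := min r (d / 3) with hδ
    have hδ0 : 0 < δ := by positivity
    have hδ1 : δ ≤ r := min_le_left _ _
    have hδ2 : δ ≤ d / 3 := min_le_right _ _
    by_contra! hcon
    have hpos : 0 < r + δ := by linarith
    have hc0 : 0 < r / (r + δ) := by positivity
    have hcr : r / (r + δ) * (r + δ) = r := by field_simp
    set c := r / (r + δ) with hc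
    have hc2 : 1 / 2 ≤ c := by nlinarith
    have e1 : ‖c • u‖ ≤ r := by
      rw [norm_smul, Real.norm_of_nonneg hc0.le]; nlinarith
    have e2 : ‖c • v‖ ≤ r := by
      rw [norm_smul, Real.norm_of_nonneg hc0.le]; nlinarith
    have e3 : ε / 2 ≤ ‖c • u - c • v‖ := by
      rw [← smul_sub, norm_smul, Real.norm_of_nonneg hc0.le]; nlinarith
    have := H e1 e2 e3
    rw [← smul_add, norm_smul, Real.norm_of_nonneg hc0.le] at this
    have h1 : c * (2 * r) ≤ 2 * r - d := le_trans (by gcongr) this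
    -- c * (2 r) = 2 r - 2 c δ
    have h3 : c ≤ 1 := by rw [hc, div_le_one hpos]; linarith
    nlinarith

theorem aux_smooth {X : Type*} [NormedAddCommGroup X] [NormedSpace ℝ X]
    (hsmooth : UnifSmooth X) (η : ℝ) (hη : 0 < η) :
    ∃ τ > 0, ∀ x h : X, ‖h‖ ≤ τ * ‖x‖ → ‖x + h‖ + ‖x - h‖ ≤ 2 * ‖x‖ + 2 * η * ‖h‖ := by
  have h1 : ∀ᶠ τ in 𝓝[>] (0:ℝ), modSmooth X τ / τ < η := hsmooth.eventually_lt_const hη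
  obtain ⟨τ0, hτ0, H⟩ := mem_nhdsGT_iff_exists_Ioc_subset.1 h1
  refine ⟨τ0, hτ0, fun x h hx => ?_⟩
  rcases eq_or_ne h 0 with rfl | hh
  · simp; linarith
  rcases eq_or_ne x 0 with rfl | hx0
  · simp at hx; exact absurd hx hh
  have hhp : 0 < ‖h‖ := norm_pos_iff.2 hh
  have hxp : 0 < ‖x‖ := norm_pos_iff.2 hx0
  set τ := ‖h‖ / ‖x‖ with hτ
  have hτp : 0 < τ := by positivity
  have hτle : τ ≤ τ0 := by rw [hτ, div_le_iff₀ hxp]; exact hx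
  have hlt : modSmooth X τ / τ < η := H ⟨hτp, hτle⟩
  rw [div_lt_iff₀ hτp] at hlt
  have hbdd : BddAbove {d : ℝ | ∃ x y : X, ‖x‖ = 1 ∧ ‖y‖ = 1 ∧
      d = (‖x + τ • y‖ + ‖x - τ • y‖) / 2 - 1} := by
    refine ⟨τ, ?_⟩
    rintro d ⟨x, y, hx, hy, rfl⟩
    have a1 := norm_add_le x (τ • y)
    have a2 := norm_sub_le x (τ • y)
    have a3 : ‖τ • y‖ = τ := by rw [norm_smul, hy, Real.norm_of_nonneg hτp.le, mul_one]
    linarith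
  have hle : (‖‖x‖⁻¹ • x + τ • (‖h‖⁻¹ • h)‖ + ‖‖x‖⁻¹ • x - τ • (‖h‖⁻¹ • h)‖) / 2 - 1
      ≤ modSmooth X τ :=
    le_csSup hbdd ⟨_, _, norm_smul_inv_norm hx0, norm_smul_inv_norm hh, rfl⟩
  have e : τ • (‖h‖⁻¹ • h) = ‖x‖⁻¹ • h := by
    rw [smul_smul]; congr 1; rw [hτ]; field_simp
  rw [e, ← smul_add, ← smul_sub, norm_smul, norm_smul, norm_inv, norm_norm] at hle
  have h4 : ‖x‖⁻¹ * (‖x + h‖ + ‖x - h‖) ≤ 2 + 2 * η * τ := by linarith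
  rw [inv_mul_le_iff₀ hxp] at h4
  have h5 : ‖x‖ * τ = ‖h‖ := by rw [hτ]; field_simp
  calc _ ≤ _ := h4
    _ = 2 * ‖x‖ + 2 * η * (‖x‖ * τ) := by ring
    _ = _ := by rw [h5]

theorem aux_proj {X : Type*} [NormedAddCommGroup X] [NormedSpace ℝ X] [CompleteSpace X]
    (hconv : UnifConvex X) (K : Submodule ℝ X) (hK : IsClosed (K : Set X)) (x : X) :
    metricProj (K : Set X) x ∈ K ∧ ∀ m ∈ K, ‖x - metricProj (K : Set X) x‖ ≤ ‖x - m‖ := by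
  suffices h : ∃ y, y ∈ (K : Set X) ∧ ∀ m ∈ (K : Set X), ‖x - y‖ ≤ ‖x - m‖ from
    Classical.epsilon_spec h
  have hne : (K : Set X).Nonempty := ⟨0, K.zero_mem⟩
  set r := Metric.infDist x (K : Set X) with hr
  have hr0 : 0 ≤ r := Metric.infDist_nonneg
  have hrle : ∀ m ∈ K, r ≤ ‖x - m‖ := fun m hm => by
    rw [← dist_eq_norm]; exact Metric.infDist_le_dist_of_mem hm
  have hex : ∀ n : ℕ, ∃ y ∈ (K : Set X), dist x y < r + 1 / ((n : ℝ) + 1) := fun n =>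
    (Metric.infDist_lt_iff hne).1 (by have : 0 < 1 / ((n : ℝ) + 1) := by positivity
                                      linarith)
  choose y hyK hy using hex
  have hlim : Tendsto (fun n : ℕ => 1 / ((n : ℝ) + 1)) atTop (𝓝 0) :=
    tendsto_one_div_add_atTop_nhds_zero_nat
  have hc : CauchySeq y := by
    rw [Metric.cauchySeq_iff]
    intro ε hε
    obtain ⟨δ, hδ, H⟩ := aux_conv hconv r hr0 ε hε
    obtain ⟨n0, hn0⟩ := eventually_atTop.1 (hlim.eventually_lt_const hδ)
    refine ⟨n0, fun m hm n hn => ?_⟩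
    have h1 := hy m
    have h2 := hy n
    rw [dist_eq_norm] at h1 h2 ⊢
    have h3 := H (x - y n) (x - y m) (by linarith [hn0 n hn]) (by linarith [hn0 m hm]) (by
      have h4 := hrle ((1/2 : ℝ) • (y n + y m)) (K.smul_mem _ (K.add_mem (hyK n) (hyK m)))
      have h5 : x - y n + (x - y m) = (2 : ℝ) • (x - (1/2 : ℝ) • (y n + y m)) := by
        module
      rw [h5, norm_smul, Real.norm_ofNat]; linarith)
    simpa using h3
  obtain ⟨z, hz⟩ := cauchySeq_tendsto_of_complete hc
  refine ⟨z, hK.mem_of_tendsto hz (Eventually.of_forall hyK), fun m hm => ?_⟩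
  refine le_trans ?_ (hrle m hm)
  have t1 : Tendsto (fun n => dist x (y n)) atTop (𝓝 (dist x z)) := tendsto_const_nhds.dist hz
  have t2 : Tendsto (fun n : ℕ => r + 1 / ((n : ℝ) + 1)) atTop (𝓝 (r + 0)) := hlim.const_add r
  have := le_of_tendsto_of_tendsto' t1 t2 (fun n => (hy n).le)
  rw [dist_eq_norm] at this
  linarith

theorem aux_decomp {X : Type*} [NormedAddCommGroup X] [NormedSpace ℝ X] [CompleteSpace X]
    (M N : Submodule ℝ X) (hM : IsClosed (M : Set X)) (hN : IsClosed (N : Set X))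
    (hMN : IsClosed ((M ⊔ N : Submodule ℝ X) : Set X)) :
    ∃ C > 0, ∀ u ∈ M ⊔ N, ∃ m ∈ M, ∃ n ∈ N, u = m + n ∧ ‖m‖ ≤ C * ‖u‖ ∧ ‖n‖ ≤ C * ‖u‖ := by
  haveI : CompleteSpace M := hM.completeSpace_coe
  haveI : CompleteSpace N := hN.completeSpace_coe
  haveI : CompleteSpace (M ⊔ N : Submodule ℝ X) := hMN.completeSpace_coe
  let f : (M × N) →L[ℝ] (M ⊔ N : Submodule ℝ X) :=
    (M.subtypeL.coprod N.subtypeL).codRestrict (M ⊔ N) (fun p =>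
      Submodule.add_mem_sup p.1.2 p.2.2)
  have hf : Function.Surjective f := by
    rintro ⟨u, hu⟩
    obtain ⟨m, hm, n, hn, rfl⟩ := Submodule.mem_sup.1 hu
    exact ⟨(⟨m, hm⟩, ⟨n, hn⟩), rfl⟩
  obtain ⟨C, hC, H⟩ := f.exists_preimage_norm_le hf
  refine ⟨C, hC, fun u hu => ?_⟩
  obtain ⟨p, hp, hpn⟩ := H ⟨u, hu⟩
  refine ⟨p.1, p.1.2, p.2, p.2.2, ?_, (norm_fst_le p).trans hpn, (norm_snd_le p).trans hpn⟩
  exact (congrArg Subtype.val hp).symm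

theorem statement16 {X : Type*} [NormedAddCommGroup X] [NormedSpace ℝ X] [CompleteSpace X]
    (hconv : UnifConvex X) (hsmooth : UnifSmooth X)
    (M N : Submodule ℝ X) (hM : IsClosed (M : Set X)) (hN : IsClosed (N : Set X))
    (hMN : IsClosed ((M ⊔ N : Submodule ℝ X) : Set X))
    (a : X) (x : ℕ → X) (hx0 : x 0 = a)
    (hodd : ∀ n : ℕ, x (2 * n + 1) = x (2 * n) - metricProj (M : Set X) (x (2 * n)))
    (heven : ∀ n : ℕ, x (2 * n + 2) = x (2 * n + 1) - metricProj (N : Set X) (x (2 * n + 1))) :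
    Filter.Tendsto x Filter.atTop
      (𝓝 (a - metricProj ((M ⊔ N : Submodule ℝ X) : Set X) a)) := by
  obtain ⟨hzK, hzmin⟩ := aux_proj hconv (M ⊔ N) hMN a
  set p := metricProj ((M ⊔ N : Submodule ℝ X) : Set X) a with hp
  set z := a - p with hz
  have hMp := fun n => aux_proj hconv M hM (x (2 * n))
  have hNp := fun n => aux_proj hconv N hN (x (2 * n + 1))
  simp_rw [← hodd] at hMp
  simp_rw [← heven] at hNp
  have hstepM : ∀ n, x (2 * n + 1) - x (2 * n) ∈ M := fun n => by
    rw [hodd, sub_sub_cancel_left]; exact M.neg_mem (hMp n).1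
  have hstepN : ∀ n, x (2 * n + 2) - x (2 * n + 1) ∈ N := fun n => by
    rw [heven, sub_sub_cancel_left]; exact N.neg_mem (hNp n).1
  -- optimality in additive form
  have hoptM : ∀ n, ∀ m ∈ M, ‖x (2 * n + 1)‖ ≤ ‖x (2 * n + 1) + m‖ := fun n m hm => by
    have := (hMp n).2 (-(x (2 * n + 1) - x (2 * n)) - m)
      (M.sub_mem (M.neg_mem (hstepM n)) hm)
    convert this using 2
    abel
  have hoptN : ∀ n, ∀ m ∈ N, ‖x (2 * n + 2)‖ ≤ ‖x (2 * n + 2) + m‖ := fun n m hm => by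
    have := (hNp n).2 (-(x (2 * n + 2) - x (2 * n + 1)) - m)
      (N.sub_mem (N.neg_mem (hstepN n)) hm)
    convert this using 2
    abel
  have hmem : ∀ n, x n - a ∈ M ⊔ N := by
    intro n
    induction n with
    | zero => simp [hx0]
    | succ n ih =>
      rw [← sub_add_sub_cancel (x (n + 1)) (x n) a]
      refine add_mem ?_ ih
      rcases Nat.even_or_odd' n with ⟨k, rfl | rfl⟩
      · exact Submodule.mem_sup_left (hstepM k)
      · exact Submodule.mem_sup_right (hstepN k)
  have hanti : Antitone fun n => ‖x n‖ := by
    refine antitone_nat_of_succ_le fun n => ?_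
    rcases Nat.even_or_odd' n with ⟨k, rfl | rfl⟩
    · simpa using (hMp k).2 0 M.zero_mem
    · simpa using (hNp k).2 0 N.zero_mem
  have hzle : ∀ w, w - a ∈ M ⊔ N → ‖z‖ ≤ ‖w‖ := fun w hw => by
    have := hzmin (-(w - a)) (neg_mem hw)
    simpa using this
  have hzx : ∀ n, ‖z‖ ≤ ‖x n‖ := fun n => hzle _ (hmem n)
  obtain ⟨r, hr⟩ : ∃ r, Tendsto (fun n => ‖x n‖) atTop (𝓝 r) :=
    ⟨_, tendsto_atTop_ciInf hanti ⟨0, by rintro _ ⟨n, rfl⟩; exact norm_nonneg _⟩⟩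
  have hrx : ∀ n, r ≤ ‖x n‖ := fun n => hanti.le_of_tendsto hr n
  have hzr : ‖z‖ ≤ r := ge_of_tendsto' hr hzx
  have hr0 : 0 ≤ r := (norm_nonneg _).trans hzr
  have hrz : r = ‖z‖ := by
    refine le_antisymm ?_ hzr
    by_contra! hlt
    obtain ⟨C, hC, hdec⟩ := aux_decomp M N hM hN hMN
    have hrp : 0 < r := (norm_nonneg _).trans_lt hlt
    set δ := r - ‖z‖ with hδ
    have hδp : 0 < δ := sub_pos.2 hlt
    set B := C * (2 * ‖a‖) + 1 with hB
    have hBp : 0 < B := by positivity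
    obtain ⟨τ, hτ, hS⟩ := aux_smooth hsmooth (δ / (8 * B)) (by positivity)
    set t := min 1 (τ * r / B) with ht
    have htp : 0 < t := by positivity
    have ht1 : t ≤ 1 := min_le_left _ _
    have htB : t * B ≤ τ * r := by rw [← le_div_iff₀ hBp]; exact min_le_right _ _
    -- small step
    obtain ⟨δ', hδ', Hc⟩ := aux_conv hconv r hr0 (t * δ / 8) (by positivity)
    obtain ⟨n0, hn0⟩ := eventually_atTop.1 (hr.eventually_lt_const (lt_add_of_pos_right r hδ'))
    have hd : ‖x (2 * n0 + 1) - x (2 * n0 + 2)‖ < t * δ / 8 := by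
      refine Hc _ _ (hn0 _ (by omega)).le (hn0 _ (by omega)).le ?_
      have h1 := hoptN n0 ((1/2 : ℝ) • -(x (2 * n0 + 2) - x (2 * n0 + 1)))
        (N.smul_mem _ (N.neg_mem (hstepN n0)))
      have h2 : x (2 * n0 + 1) + x (2 * n0 + 2) = (2 : ℝ) • (x (2 * n0 + 2) +
        (1/2 : ℝ) • -(x (2 * n0 + 2) - x (2 * n0 + 1))) := by module
      rw [h2, norm_smul, Real.norm_ofNat]
      have h3 := hrx (2 * n0 + 2)

      linarith
    have hoM := hoptM n0
    have hoN : ∀ m ∈ N, ‖x (2 * n0 + 1)‖ - t * δ / 4 ≤ ‖x (2 * n0 + 1) + m‖ := fun m hm => by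
      have h1 := hoptN n0 m hm
      have h2 : ‖x (2 * n0 + 2) + m‖ ≤
          ‖x (2 * n0 + 1) + m‖ + ‖x (2 * n0 + 1) - x (2 * n0 + 2)‖ := by
        refine le_trans (le_of_eq ?_) (norm_sub_le _ _)
        congr 1; abel
      have h3 : ‖x (2 * n0 + 1)‖ ≤
          ‖x (2 * n0 + 2)‖ + ‖x (2 * n0 + 1) - x (2 * n0 + 2)‖ := by
        refine le_trans (le_of_eq ?_) (norm_add_le _ _)
        congr 1; abel
      linarith
    have hmy := hmem (2 * n0 + 1)
    have hya : ‖x (2 * n0 + 1)‖ ≤ ‖a‖ := by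
      have := hanti (Nat.zero_le (2 * n0 + 1))
      simpa [hx0] using this
    have hry := hrx (2 * n0 + 1)
    generalize x (2 * n0 + 1) = y at *
    have hu : y - z ∈ M ⊔ N := by
      have : y - z = (y - a) + p := by rw [hz]; abel
      rw [this]; exact add_mem hmy hzK
    obtain ⟨m, hm, n, hn, hmn, hmC, hnC⟩ := hdec _ hu
    have huB : C * ‖y - z‖ ≤ B := by
      have h1 := norm_sub_le y z
      have h2 : ‖y - z‖ ≤ 2 * ‖a‖ := by linarith
      have := mul_le_mul_of_nonneg_left h2 hC.le
      linarith
    have key : ∀ q : X, ‖q‖ ≤ B → ‖y + t • q‖ + ‖y - t • q‖ ≤ 2 * ‖y‖ + t * δ / 4 := by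
      intro q hq
      have h1 : ‖t • q‖ ≤ t * B := by
        rw [norm_smul, Real.norm_of_nonneg htp.le]; gcongr
      have h2 : τ * r ≤ τ * ‖y‖ := by gcongr
      have h3 := hS y (t • q) (by linarith)
      have h4 : 2 * (δ / (8 * B)) * ‖t • q‖ ≤ 2 * (δ / (8 * B)) * (t * B) := by gcongr
      have h5 : 2 * (δ / (8 * B)) * (t * B) = t * δ / 4 := by field_simp; norm_num
      linarith
    have k1 := key m (hmC.trans huB)
    have k2 := key n (hnC.trans huB)
    have l1 := hoM (-(t • m)) (M.neg_mem (M.smul_mem _ hm))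
    have l2 := hoN (-(t • n)) (N.neg_mem (N.smul_mem _ hn))
    rw [← sub_eq_add_neg] at l1 l2
    have g1 : 3 * ‖y‖ ≤ ‖y - t • (y - z)‖ + ‖y + t • m‖ + ‖y + t • n‖ := by
      have : (3 : ℝ) • y = (y - t • (y - z)) + (y + t • m) + (y + t • n) := by
        rw [hmn]; module
      have h := norm_add₃_le (a := y - t • (y - z)) (b := y + t • m) (c := y + t • n)
      rw [← this, norm_smul] at h
      norm_num at h ⊢
      linarith
    have g2 : ‖y - t • (y - z)‖ ≤ (1 - t) * ‖y‖ + t * ‖z‖ := by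
      have : y - t • (y - z) = (1 - t) • y + t • z := by module
      rw [this]
      refine (norm_add_le _ _).trans ?_
      rw [norm_smul, norm_smul, Real.norm_of_nonneg htp.le,
        Real.norm_of_nonneg (sub_nonneg.2 ht1)]
    have g3 : t * δ ≤ t * (‖y‖ - ‖z‖) := by
      apply mul_le_mul_of_nonneg_left _ htp.le
      linarith
    have : 0 < t * δ := by positivity
    linarith
  rw [Metric.tendsto_atTop]
  intro ε hε
  obtain ⟨δ, hδ, Hc⟩ := aux_conv hconv r hr0 ε hε
  obtain ⟨n0, hn0⟩ := eventually_atTop.1 (hr.eventually_lt_const (lt_add_of_pos_right r hδ))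
  refine ⟨n0, fun n hn => ?_⟩
  rw [dist_eq_norm]
  refine Hc _ _ (hn0 n hn).le (by linarith) ?_
  have h1 := hzle ((1/2 : ℝ) • (x n + z)) (by
    have : (1/2 : ℝ) • (x n + z) - a = (1/2 : ℝ) • ((x n - a) - p) := by
      rw [hz]; module
    rw [this]
    exact Submodule.smul_mem _ _ (sub_mem (hmem n) hzK))
  rw [norm_smul] at h1
  norm_num at h1
  linarith
end
end
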